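/- Let n ≥ 3 be odd. For any triple of pairwise distinct indices i, j, k ∈ [n], as elements of k[x]/J_n one has x_{ij} · p^+_{n,k} = x_{jk} · p^+_{n,i}; that is, x_{ij} · p^+_{n,k} − x_{jk} · p^+_{n,i} ∈ J_n. -/

import Mathlib

open scoped BigOperators

namespace Veronese

open MvPolynomial

/-- `c m = C(m,2)`. -/
def c (m : ℕ) : ℕ := m.choose 2

variable (n : ℕ)

/-- multiplicity (as ℤ) of the index `i` in the unordered pair `s`. -/
def wt (s : Sym2 (Fin n)) : Fin n → ℤ :=
  Sym2.lift ⟨fun a b i => (if i = a then 1 else 0) + (if i = b then 1 else 0),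
    fun a b => funext fun i => add_comm _ _⟩ s

/-- The Veronese grading map `V_n : ℤ^P → ℤ^n`, sending `e_{ij} ↦ e_i + e_j`. -/
def Vmap : (Sym2 (Fin n) → ℤ) →ₗ[ℤ] (Fin n → ℤ) where
  toFun u := fun i => ∑ s : Sym2 (Fin n), u s * wt n s i
  map_add' u v := funext fun i => by
    simp [add_mul, Finset.sum_add_distrib]
  map_smul' m u := funext fun i => by
    simp [Finset.mul_sum, smul_eq_mul, mul_assoc]

/-- The Veronese lattice `L_n = ker V_n`. -/
def Llat : Submodule ℤ (Sym2 (Fin n) → ℤ) := LinearMap.ker (Vmap n)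

/-- standard basis vector `e_{ij}` of `ℤ^P`. -/
def e (i j : Fin n) : Sym2 (Fin n) → ℤ := Pi.single s(i, j) 1

lemma e_comm (i j : Fin n) : e n i j = e n j i := by
  unfold e; rw [Sym2.eq_swap]

/-- `[ij|ij] = e_{ii} + e_{jj} - 2 e_{ij}`. -/
def minorVec (i j : Fin n) : Sym2 (Fin n) → ℤ := e n i i + e n j j - 2 • e n i j

/-- The principal minor lattice `L'_n`. -/
def L'lat : Submodule ℤ (Sym2 (Fin n) → ℤ) :=
  Submodule.span ℤ {v | ∃ i j : Fin n, i < j ∧ v = minorVec n i j}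

/-- the last index `n` (zero-based: `n-1`) of `Fin n`. -/
def lastIdx (hn : 0 < n) : Fin n := ⟨n - 1, Nat.sub_lt hn one_pos⟩

/-- embedding `[n-1] → [n]`. -/
def ι : Fin (n - 1) → Fin n := Fin.castLE (Nat.sub_le n 1)

/-- `[in|jn] = e_{ij} + e_{nn} - e_{in} - e_{jn}` for `i,j ∈ [n-1]`. -/
def Bvec (hn : 0 < n) : Sym2 (Fin (n - 1)) → (Sym2 (Fin n) → ℤ) :=
  Sym2.lift ⟨fun i j =>
      e n (ι n i) (ι n j) + e n (lastIdx n hn) (lastIdx n hn)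
        - e n (ι n i) (lastIdx n hn) - e n (ι n j) (lastIdx n hn),
    fun i j => by dsimp only; rw [e_comm n (ι n i) (ι n j)]; ring⟩

/-- The family `B'`: `[in|in]` on the diagonal, `2[in|jn]` off it. -/
noncomputable def B'vec (hn : 0 < n) (s : Sym2 (Fin (n - 1))) : Sym2 (Fin n) → ℤ :=
  if s.IsDiag then Bvec n hn s else 2 • Bvec n hn s

/-- multiplicity (as ℕ) of the index `i` in the unordered pair `s`. -/
def wtN (s : Sym2 (Fin n)) : Fin n → ℕ :=
  Sym2.lift ⟨fun a b i => (if i = a then 1 else 0) + (if i = b then 1 else 0),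
    fun a b => funext fun i => add_comm _ _⟩ s

/-- The Veronese degree of an exponent vector `u ∈ ℕ^P`. -/
def VN (u : Sym2 (Fin n) →₀ ℕ) : Fin n → ℕ := fun i => ∑ s : Sym2 (Fin n), u s * wtN n s i

/-- The fiber `V_n^{-1}[b] = {u ∈ ℕ^P : V_n u = b}`. -/
def fiber (b : Fin n → ℕ) : Set (Sym2 (Fin n) →₀ ℕ) := {u | VN n u = b}

/-- natural inclusion `ℕ^P → ℤ^P`. -/
def toZ (u : Sym2 (Fin n) →₀ ℕ) : Sym2 (Fin n) → ℤ := fun s => (u s : ℤ)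

lemma fiber_finite (b : Fin n → ℕ) : (fiber n b).Finite := by
  classical
  have hsub : fiber n b ⊆
      ↑(Finset.Iic ((Finsupp.equivFunOnFinite.symm fun _ => ∑ i, b i) : Sym2 (Fin n) →₀ ℕ)) := by
    intro u hu
    simp only [Finset.coe_Iic, Set.mem_Iic, Finsupp.le_def]
    intro s
    induction s using Sym2.ind with
    | _ i j =>
      have h1 : u s(i, j) * wtN n s(i, j) i ≤ VN n u i :=
        Finset.single_le_sum (f := fun s => u s * wtN n s i)
          (fun s _ => Nat.zero_le _) (Finset.mem_univ s(i, j))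
      have h2 : 1 ≤ wtN n s(i, j) i := by
        simp only [wtN, Sym2.lift_mk, if_pos rfl]
        exact Nat.le_add_right 1 _
      have h3 : u s(i, j) ≤ b i := by
        have hb : VN n u i = b i := congrFun hu i
        calc u s(i, j) ≤ u s(i, j) * wtN n s(i, j) i := Nat.le_mul_of_pos_right _ h2
          _ ≤ VN n u i := h1
          _ = b i := hb
      calc u s(i, j) ≤ b i := h3
        _ ≤ ∑ i, b i := Finset.single_le_sum (fun _ _ => Nat.zero_le _) (Finset.mem_univ _)
        _ = (Finsupp.equivFunOnFinite.symm fun _ => ∑ i, b i) s(i, j) := by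
            simp
  exact Set.Finite.subset (Finset.finite_toSet _) hsub

variable (k : Type*) [Field k]

/-- the polynomial ring `k[x_{ij}]`. -/
abbrev R := MvPolynomial (Sym2 (Fin n)) k

/-- The principal minor ideal `J_n`. -/
noncomputable def Jideal : Ideal (R n k) :=
  Ideal.span {f | ∃ i j : Fin n, i < j ∧ f = X s(i, i) * X s(j, j) - X s(i, j) ^ 2}

/-- The map `x_{ij} ↦ t_i t_j`. -/
noncomputable def veroHom : R n k →ₐ[k] MvPolynomial (Fin n) k :=
  aeval fun s => Sym2.lift ⟨fun a b => X a * X b, fun a b => mul_comm _ _⟩ s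

/-- The second Veronese ideal `I_n`. -/
noncomputable def Iideal : Ideal (R n k) := RingHom.ker (veroHom n k)

/-- A ℤ₂-twisting: an automorphism sending each variable to ± itself. -/
def IsTwisting (φ : R n k ≃ₐ[k] R n k) : Prop :=
  ∀ s : Sym2 (Fin n), φ (X s) = X s ∨ φ (X s) = - X s

/-- `f` is V_n-homogeneous of degree `b`. -/
def VHomog (f : R n k) (b : Fin n → ℕ) : Prop := ∀ u ∈ f.support, VN n u = b

/-- The fiber over `b` as a finite set. -/
noncomputable def fiberFinset (b : Fin n → ℕ) : Finset (Sym2 (Fin n) →₀ ℕ) :=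
  (fiber_finite n b).toFinset

/-- generating function of the canonical (0/1 off-diagonal) representatives of
the fiber over `b`. -/
noncomputable def pplusAt (b : Fin n → ℕ) : R n k :=
  ∑ u ∈ (fiberFinset n b).filter (fun u => ∀ s : Sym2 (Fin n), ¬s.IsDiag → u s ≤ 1),
    monomial u (1 : k)

/-- `p⁺_{n,j}` (for `n` odd): fiber over `(n-2,…,n-2) + e_j`. -/
noncomputable def pplusOdd (j : Fin n) : R n k :=
  pplusAt n k fun i => (n - 2) + if i = j then 1 else 0

/-- `p⁺_n` (for `n` even): fiber over `(n-2,…,n-2)`. -/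
noncomputable def pplusEven : R n k :=
  pplusAt n k fun _ => n - 2

/-- `p_n = ∏_{i<j∈[n-1]} (x_{ij} x_{nn} + x_{in} x_{jn})`. -/
noncomputable def pn (hn : 0 < n) : R n k :=
  ∏ p ∈ Finset.univ.filter (fun p : Fin (n - 1) × Fin (n - 1) => p.1 < p.2),
    (X s(ι n p.1, ι n p.2) * X s(lastIdx n hn, lastIdx n hn)
      + X s(ι n p.1, lastIdx n hn) * X s(ι n p.2, lastIdx n hn))

/-!
Read a canonical exponent vector as a graph on `[n]` with loops. Modulo `J_n`, multiplication by
`x_{ij}` toggles the edge `ij`, because `x_{ij}²` may be traded for the two loops `x_{ii} x_{jj}`.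
A vertex lies on at most `n - 1` non-loop edges, so in a canonical monomial of degree at least `n`
at `i` and `j` both loops are present, and toggling is a bijection between canonical fibers as soon
as the source degree is at least `n - 2` at `i` and `j`. Thus `x_{ij} · p⁺_b = p⁺_{b + e_i + e_j}`
modulo `J_n`, and both sides of the syzygy equal `p⁺` of the degree
`(n - 2, …, n - 2) + e_i + e_j + e_l`.
-/

section CanonicalMonomials

variable {n k}

lemma VN_add (u v : Sym2 (Fin n) →₀ ℕ) : VN n (u + v) = VN n u + VN n v := by
  funext a
  simp [VN, add_mul, Finset.sum_add_distrib]

lemma VN_single (s : Sym2 (Fin n)) : VN n (Finsupp.single s 1) = wtN n s := by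
  funext a
  simp [VN, Finsupp.single_apply]

lemma wtN_eq_zero_of_notMem {s : Sym2 (Fin n)} {a : Fin n} (ha : a ∉ s) : wtN n s a = 0 := by
  induction s using Sym2.ind with
  | _ i j => simp_all [wtN]

lemma wtN_apply_eq_sum (s : Sym2 (Fin n)) (a : Fin n) :
    wtN n s a = (if s = s(a, a) then 1 else 0) + ∑ b, if s = s(a, b) then 1 else 0 := by
  induction s using Sym2.ind with
  | _ i j =>
    by_cases hi : i = a <;> by_cases hj : j = a <;>
      simp [wtN, hi, hj, eq_comm (a := a)]

lemma VN_apply_eq_sum (u : Sym2 (Fin n) →₀ ℕ) (a : Fin n) :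
    VN n u a = u s(a, a) + ∑ b, u s(a, b) := by
  simp only [VN, wtN_apply_eq_sum, mul_add, Finset.sum_add_distrib, Finset.mul_sum]
  rw [Finset.sum_comm]
  simp

/-- Exponent vectors with entries at most `1` off the diagonal: the chosen representatives of the
fibers of the Veronese grading modulo the principal minor lattice. -/
def IsCanonical (u : Sym2 (Fin n) →₀ ℕ) : Prop :=
  ∀ s : Sym2 (Fin n), ¬s.IsDiag → u s ≤ 1

lemma IsCanonical.VN_lt {u : Sym2 (Fin n) →₀ ℕ} (hu : IsCanonical u) (a : Fin n) :
    VN n u a < 2 * u s(a, a) + n := by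
  have hoff : ∑ b ∈ Finset.univ.erase a, u s(a, b) ≤ n - 1 := by
    have hle : ∀ b ∈ Finset.univ.erase a, u s(a, b) ≤ 1 := fun b hb =>
      hu _ (by simpa using (Finset.ne_of_mem_erase hb).symm)
    simpa using Finset.sum_le_card_nsmul _ _ _ hle
  rw [VN_apply_eq_sum, ← Finset.add_sum_erase _ _ (Finset.mem_univ a)]
  have := a.pos
  omega

/-- The exponent vector `e_{ii} + e_{jj}` of the monomial that `x_{ij}²` is congruent to modulo
the principal minor ideal. -/
noncomputable def loops : Sym2 (Fin n) → (Sym2 (Fin n) →₀ ℕ) :=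
  Sym2.lift ⟨fun i j => Finsupp.single s(i, i) 1 + Finsupp.single s(j, j) 1,
    fun _ _ => add_comm _ _⟩

lemma loops_apply_diag (s : Sym2 (Fin n)) (a : Fin n) : loops s s(a, a) = wtN n s a := by
  induction s using Sym2.ind with
  | _ i j => simp [loops, wtN, Finsupp.single_apply, eq_comm (a := a)]

lemma loops_apply_of_not_isDiag (s : Sym2 (Fin n)) {t : Sym2 (Fin n)} (ht : ¬t.IsDiag) :
    loops s t = 0 := by
  induction s using Sym2.ind with
  | _ i j =>
    have hne (a : Fin n) : s(a, a) ≠ t := by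
      rintro rfl
      simp at ht
    simp [loops, hne]

lemma loops_of_isDiag {s : Sym2 (Fin n)} (hs : s.IsDiag) :
    loops s = Finsupp.single s 1 + Finsupp.single s 1 := by
  induction s using Sym2.ind with
  | _ i j =>
    obtain rfl : i = j := hs
    rfl

lemma VN_loops (s : Sym2 (Fin n)) : VN n (loops s) = wtN n s + wtN n s := by
  induction s using Sym2.ind with
  | _ i j =>
    funext a
    simp only [loops, Sym2.lift_mk, VN_add, VN_single, wtN, Pi.add_apply]
    ring

lemma IsCanonical.loops_le {s : Sym2 (Fin n)} {u : Sym2 (Fin n) →₀ ℕ} (hu : IsCanonical u)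
    (h : ∀ a ∈ s, n - 2 + 2 * wtN n s a ≤ VN n u a) : loops s ≤ u := by
  intro t
  by_cases ht : t.IsDiag
  · induction t using Sym2.ind with
    | _ a b =>
      obtain rfl : a = b := ht
      rw [loops_apply_diag]
      by_cases ha : a ∈ s
      · have := h a ha
        have := hu.VN_lt a
        omega
      · simp [wtN_eq_zero_of_notMem ha]
  · simp [loops_apply_of_not_isDiag s ht]

/-- The exponent vector of `x_s · x^u` after replacing `x_s²`, if it divides this monomial, by the
product of the diagonal variables. On canonical vectors, read as graphs with loops, this toggles
the edge `s`. -/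
noncomputable def toggle (s : Sym2 (Fin n)) (u : Sym2 (Fin n) →₀ ℕ) : Sym2 (Fin n) →₀ ℕ :=
  if u s = 0 then u + Finsupp.single s 1 else u - Finsupp.single s 1 + loops s

lemma toggle_of_eq_zero {s : Sym2 (Fin n)} {u : Sym2 (Fin n) →₀ ℕ} (hu : u s = 0) :
    toggle s u = u + Finsupp.single s 1 :=
  if_pos hu

lemma toggle_add_single (s : Sym2 (Fin n)) (u : Sym2 (Fin n) →₀ ℕ) :
    toggle s (u + Finsupp.single s 1) = u + loops s := by
  simp [toggle]

lemma eq_zero_or_exists_eq_add_single (s : Sym2 (Fin n)) (u : Sym2 (Fin n) →₀ ℕ) :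
    u s = 0 ∨ ∃ v, u = v + Finsupp.single s 1 := by
  refine or_iff_not_imp_left.2 fun hs => ⟨u - Finsupp.single s 1, (tsub_add_cancel_of_le ?_).symm⟩
  rwa [Finsupp.single_le_iff, Nat.one_le_iff_ne_zero]

lemma toggle_of_isDiag {s : Sym2 (Fin n)} (hs : s.IsDiag) (u : Sym2 (Fin n) →₀ ℕ) :
    toggle s u = u + Finsupp.single s 1 := by
  obtain hu | ⟨v, rfl⟩ := eq_zero_or_exists_eq_add_single s u
  · exact toggle_of_eq_zero hu
  · rw [toggle_add_single, loops_of_isDiag hs, add_assoc]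

lemma VN_toggle (s : Sym2 (Fin n)) (u : Sym2 (Fin n) →₀ ℕ) :
    VN n (toggle s u) = VN n u + wtN n s := by
  obtain hu | ⟨v, rfl⟩ := eq_zero_or_exists_eq_add_single s u
  · rw [toggle_of_eq_zero hu, VN_add, VN_single]
  · rw [toggle_add_single, VN_add, VN_add, VN_loops, VN_single, add_assoc]

lemma IsCanonical.toggled {u : Sym2 (Fin n) →₀ ℕ} (hu : IsCanonical u) (s : Sym2 (Fin n)) :
    IsCanonical (toggle s u) := by
  intro t ht
  have htu := hu t ht
  obtain hs | ⟨v, rfl⟩ := eq_zero_or_exists_eq_add_single s u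
  · rw [toggle_of_eq_zero hs]
    obtain rfl | hst := eq_or_ne s t
    · simp [hs]
    · simpa [hst] using htu
  · rw [toggle_add_single, Finsupp.add_apply, loops_apply_of_not_isDiag s ht]
    exact (Nat.le_add_right _ _).trans htu

lemma IsCanonical.of_add_left {u v : Sym2 (Fin n) →₀ ℕ} (h : IsCanonical (u + v)) : IsCanonical u :=
  fun s hs => (Nat.le_add_right _ _).trans (h s hs)

lemma IsCanonical.toggle_toggle {u : Sym2 (Fin n) →₀ ℕ} (hu : IsCanonical u) (s : Sym2 (Fin n)) :
    toggle s (toggle s u) = u + loops s := by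
  by_cases hs : s.IsDiag
  · rw [toggle_of_isDiag hs, toggle_of_isDiag hs, loops_of_isDiag hs, add_assoc]
  obtain h | ⟨v, rfl⟩ := eq_zero_or_exists_eq_add_single s u
  · rw [toggle_of_eq_zero h, toggle_add_single]
  · have hv : v s = 0 := by simpa using hu s hs
    rw [toggle_add_single, toggle_of_eq_zero, add_right_comm]
    simp [hv, loops_apply_of_not_isDiag s hs]

lemma toggle_add_loops (s : Sym2 (Fin n)) (u : Sym2 (Fin n) →₀ ℕ) :
    toggle s (u + loops s) = toggle s u + loops s := by
  by_cases hs : s.IsDiag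
  · rw [toggle_of_isDiag hs, toggle_of_isDiag hs, add_right_comm]
  obtain h | ⟨v, rfl⟩ := eq_zero_or_exists_eq_add_single s u
  · rw [toggle_of_eq_zero h, toggle_of_eq_zero, add_right_comm]
    simp [h, loops_apply_of_not_isDiag s hs]
  · rw [add_right_comm, toggle_add_single, toggle_add_single]

/-- The canonical exponent vectors of Veronese degree `b`, which index the monomials of
`pplusAt n k b`. -/
def canonicalFiber (b : Fin n → ℕ) : Set (Sym2 (Fin n) →₀ ℕ) :=
  {u | VN n u = b ∧ IsCanonical u}

-- Up to the translation by `loops s`, toggling is an involution; the degree bound makes it possible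
-- to undo the translation.
lemma bijOn_toggle_canonicalFiber {s : Sym2 (Fin n)} {b : Fin n → ℕ}
    (hb : ∀ a ∈ s, n - 2 ≤ b a) :
    Set.BijOn (toggle s) (canonicalFiber b) (canonicalFiber (b + wtN n s)) := by
  refine ⟨?mapsTo, ?injOn, ?surjOn⟩
  case mapsTo =>
    exact fun u ⟨hdeg, hu⟩ => ⟨by rw [VN_toggle, hdeg], hu.toggled s⟩
  case injOn =>
    intro u hu v hv huv
    apply add_right_cancel (b := loops s)
    rw [← hu.2.toggle_toggle, ← hv.2.toggle_toggle, huv]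
  case surjOn =>
    rintro w ⟨hdeg, hw⟩
    have hVN : VN n (toggle s w) = b + wtN n s + wtN n s := by rw [VN_toggle, hdeg]
    have hle : loops s ≤ toggle s w := (hw.toggled s).loops_le fun a ha => by
      have := hb a ha
      simp only [hVN, Pi.add_apply]
      omega
    obtain ⟨u, hu⟩ : ∃ u, toggle s w = u + loops s := le_iff_exists_add'.1 hle
    have hcan : IsCanonical (u + loops s) := hu ▸ hw.toggled s
    refine ⟨u, ⟨?_, hcan.of_add_left⟩, ?_⟩
    · rw [hu, VN_add, VN_loops, add_assoc] at hVN
      exact add_right_cancel hVN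
    · apply add_right_cancel (b := loops s)
      rw [← toggle_add_loops, ← hu, hw.toggle_toggle]

lemma X_mul_X_sub_X_sq_mem_Jideal (i j : Fin n) :
    (X s(i, i) * X s(j, j) - X s(i, j) ^ 2 : R n k) ∈ Jideal n k := by
  obtain h | rfl | h := lt_trichotomy i j
  · exact Ideal.subset_span ⟨i, j, h, rfl⟩
  · simp [sq]
  · exact Ideal.subset_span ⟨j, i, h, by rw [mul_comm, Sym2.eq_swap (a := i) (b := j)]⟩

lemma monomial_loops_sub_X_sq_mem_Jideal (s : Sym2 (Fin n)) :
    monomial (loops s) (1 : k) - X s ^ 2 ∈ Jideal n k := by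
  induction s using Sym2.ind with
  | _ i j =>
    convert X_mul_X_sub_X_sq_mem_Jideal i j
    simp [loops, X, monomial_mul]

lemma X_mul_monomial_sub_monomial_toggle_mem_Jideal (s : Sym2 (Fin n))
    (u : Sym2 (Fin n) →₀ ℕ) :
    X s * monomial u (1 : k) - monomial (toggle s u) 1 ∈ Jideal n k := by
  obtain h | ⟨v, rfl⟩ := eq_zero_or_exists_eq_add_single s u
  · simp [toggle_of_eq_zero h, monomial_add_single, mul_comm]
  · have hfactor : X s * monomial (v + Finsupp.single s 1) (1 : k) - monomial (v + loops s) 1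
        = -monomial v 1 * (monomial (loops s) 1 - X s ^ 2) := by
      rw [monomial_add_single, ← one_mul (1 : k), ← monomial_mul, one_mul]
      ring
    rw [toggle_add_single, hfactor]
    exact Ideal.mul_mem_left _ _ (monomial_loops_sub_X_sq_mem_Jideal s)

lemma coe_filter_fiberFinset (b : Fin n → ℕ) :
    ((fiberFinset n b).filter fun u => ∀ s : Sym2 (Fin n), ¬s.IsDiag → u s ≤ 1 : Set _)
      = canonicalFiber b := by
  ext u
  simp [fiberFinset, fiber, canonicalFiber, IsCanonical]

lemma pplusAt_add_wtN {s : Sym2 (Fin n)} {b : Fin n → ℕ} (hb : ∀ a ∈ s, n - 2 ≤ b a) :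
    pplusAt n k (b + wtN n s) =
      ∑ u ∈ (fiberFinset n b).filter fun u => ∀ t : Sym2 (Fin n), ¬t.IsDiag → u t ≤ 1,
        monomial (toggle s u) 1 := by
  have hbij := bijOn_toggle_canonicalFiber hb
  rw [← coe_filter_fiberFinset, ← coe_filter_fiberFinset] at hbij
  exact (Finset.sum_nbij _ hbij.mapsTo hbij.injOn hbij.surjOn fun _ _ => rfl).symm

lemma X_mul_pplusAt_sub_pplusAt_mem_Jideal {s : Sym2 (Fin n)} {b : Fin n → ℕ}
    (hb : ∀ a ∈ s, n - 2 ≤ b a) :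
    X s * pplusAt n k b - pplusAt n k (b + wtN n s) ∈ Jideal n k := by
  rw [pplusAt_add_wtN hb, pplusAt, Finset.mul_sum, ← Finset.sum_sub_distrib]
  exact Ideal.sum_mem _ fun u _ => X_mul_monomial_sub_monomial_toggle_mem_Jideal s u

theorem syzygy_pplus_odd_general {s t : Sym2 (Fin n)} {b b' : Fin n → ℕ}
    (hb : ∀ a ∈ s, n - 2 ≤ b a) (hb' : ∀ a ∈ t, n - 2 ≤ b' a)
    (h : b + wtN n s = b' + wtN n t) :
    X s * pplusAt n k b - X t * pplusAt n k b' ∈ Jideal n k := by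
  have hs := X_mul_pplusAt_sub_pplusAt_mem_Jideal (k := k) hb
  have ht := X_mul_pplusAt_sub_pplusAt_mem_Jideal (k := k) hb'
  rw [h] at hs
  simpa using sub_mem hs ht

end CanonicalMonomials

/-- For odd `n ≥ 3` and pairwise distinct `i, j, l ∈ [n]`:
`x_{ij} · p⁺_{n,l} = x_{jl} · p⁺_{n,i}` in `k[x]/J_n`. -/
theorem syzygy_pplus_odd (n : ℕ) (hn : 3 ≤ n) (hodd : Odd n)
    (k : Type*) [Field k] (i j l : Fin n)
    (hij : i ≠ j) (hjl : j ≠ l) (hil : i ≠ l) :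
    X s(i, j) * pplusOdd n k l - X s(j, l) * pplusOdd n k i ∈ Jideal n k := by
  refine syzygy_pplus_odd_general (by simp) (by simp) (funext fun a => ?_)
  simp only [wtN, Sym2.lift_mk, Pi.add_apply]
  ring

end Veronese
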